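/- Let G be an achievement positional game. If Left has a winning (resp. non-losing) strategy on G as second player, then Left has a winning (resp. non-losing) strategy on G as first player. -/

import Mathlib

namespace APG

/-- The two players: Left and Right. -/
inductive Player : Type
  | L : Player
  | R : Player
deriving DecidableEq, Repr

/-- The opponent of a player. -/
def Player.other : Player → Player
  | .L => .R
  | .R => .L

/-- An achievement positional game: a finite vertex set together with the set of
blue edges (Left's winning sets) and the set of red edges (Right's winning sets). -/
structure Game : Type where
  V : Finset ℕ
  EL : Finset (Finset ℕ)
  ER : Finset (Finset ℕ)

/-- The edges are nonempty subsets of the vertex set. -/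
def WellFormed (G : Game) : Prop :=
  (∀ e ∈ G.EL, e ⊆ G.V ∧ e.Nonempty) ∧ (∀ e ∈ G.ER, e ⊆ G.V ∧ e.Nonempty)

/-- The winning sets of a given player. -/
def Game.edges (G : Game) : Player → Finset (Finset ℕ)
  | .L => G.EL
  | .R => G.ER

/-- The player who makes the `i`-th move (0-indexed) when `s` moves first. -/
def mover (s : Player) (i : ℕ) : Player := if i % 2 = 0 then s else s.other

/-- The set of vertices picked by player `p` along the history `h`
(the chronological list of the moves played so far), when `s` moved first. -/
def picked (s p : Player) (h : List ℕ) : Finset ℕ :=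
  ((Finset.range h.length).filter fun i => mover s i = p).image fun i => h.getD i 0

/-- The set `S` of picked vertices fills some edge of `E`. -/
def fills (E : Finset (Finset ℕ)) (S : Finset ℕ) : Prop := ∃ e ∈ E, e ⊆ S

/-- The game is over: some player has picked all the vertices of one of their edges. -/
def ended (G : Game) (s : Player) (h : List ℕ) : Prop :=
  fills G.EL (picked s .L h) ∨ fills G.ER (picked s .R h)

/-- `h` is a legal history: no vertex is picked twice, every picked vertex belongs to
the board, and no move is made after the game has ended. -/
def ValidHist (G : Game) (s : Player) (h : List ℕ) : Prop :=
  h.Nodup ∧ (∀ x ∈ h, x ∈ G.V) ∧ ∀ k, k < h.length → ¬ ended G s (h.take k)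

/-- A strategy: a map assigning to each position (history) a vertex to pick. -/
abbrev Strategy := List ℕ → ℕ

/-- Along `h`, every move of player `p` agrees with the strategy `σ`. -/
def Follows (s p : Player) (σ : Strategy) (h : List ℕ) : Prop :=
  ∀ k, k < h.length → mover s k = p → h.getD k 0 = σ (h.take k)

/-- A finished play: either the game has ended or all vertices have been picked. -/
def Complete (G : Game) (s : Player) (h : List ℕ) : Prop :=
  ended G s h ∨ h.length = G.V.card

/-- The strategy `σ` of player `p` always suggests a legal move (an unpicked vertex)
whenever the game is not over and it is `p`'s turn. -/
def Legal (G : Game) (s p : Player) (σ : Strategy) : Prop :=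
  ∀ h, ValidHist G s h → Follows s p σ h → ¬ ended G s h → h.length < G.V.card →
    mover s h.length = p → σ h ∈ G.V ∧ σ h ∉ h

/-- Player `p` has a winning strategy on `G` when `s` moves first: following it,
every finished play ends with `p` having filled one of their edges (and, the game
having ended right there, the opponent has not filled an edge first). -/
def WinsAs (G : Game) (s p : Player) : Prop :=
  ∃ σ : Strategy, Legal G s p σ ∧
    ∀ h, ValidHist G s h → Follows s p σ h → Complete G s h →
      fills (G.edges p) (picked s p h)

/-- Player `p` has a non-losing strategy on `G` when `s` moves first: following it,
the opponent never fills one of their edges. -/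
def NonLosingAs (G : Game) (s p : Player) : Prop :=
  ∃ σ : Strategy, Legal G s p σ ∧
    ∀ h, ValidHist G s h → Follows s p σ h → Complete G s h →
      ¬ fills (G.edges p.other) (picked s p.other h)

/-- The possible results of the game, for a fixed starting player. -/
inductive Result : Type
  | Lwin : Result
  | draw : Result
  | Rwin : Result
deriving DecidableEq, Repr

/-- The result of `G` with optimal play, when `s` moves first, is `r`:
a win for a player means that player has a winning strategy, a draw means
both players have non-losing strategies. -/
def resultIs (G : Game) (s : Player) : Result → Prop
  | .Lwin => WinsAs G s .L
  | .Rwin => WinsAs G s .R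
  | .draw => NonLosingAs G s .L ∧ NonLosingAs G s .R

/-- An outcome: the pair of results with optimal play
(when Left starts, when Right starts). -/
abbrev Outcome := Result × Result

/-- `G` has outcome `o`. -/
def hasOutcome (G : Game) (o : Outcome) : Prop :=
  resultIs G .L o.1 ∧ resultIs G .R o.2

/-- Numerical value of a result, from Left's point of view:
Right wins < draw < Left wins. -/
def Result.val : Result → ℕ
  | .Rwin => 0
  | .draw => 1
  | .Lwin => 2

/-- The partial order `≤_L` on outcomes, comparing both components simultaneously
from Left's point of view. -/
def outLE (o o' : Outcome) : Prop := o.1.val ≤ o'.1.val ∧ o.2.val ≤ o'.2.val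

def oL : Outcome := (.Lwin, .Lwin)
def oLminus : Outcome := (.Lwin, .draw)
def oN : Outcome := (.Lwin, .Rwin)
def oD : Outcome := (.draw, .draw)
def oRminus : Outcome := (.draw, .Rwin)
def oR : Outcome := (.Rwin, .Rwin)

/-- The updated game `G_u` after Left has picked `u`. -/
def subL (G : Game) (u : ℕ) : Game where
  V := G.V.erase u
  EL := G.EL.image fun e => e.erase u
  ER := G.ER.filter fun e => u ∉ e

/-- The updated game `G^u` after Right has picked `u`. -/
def subR (G : Game) (u : ℕ) : Game where
  V := G.V.erase u
  EL := G.EL.filter fun e => u ∉ e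
  ER := G.ER.image fun e => e.erase u

/-- The updated game `G_u^v` after Left has picked `u` and Right has picked `v`. -/
def updLR (G : Game) (u v : ℕ) : Game where
  V := (G.V.erase u).erase v
  EL := (G.EL.filter fun e => v ∉ e).image fun e => e.erase u
  ER := (G.ER.filter fun e => u ∉ e).image fun e => e.erase v

/-- The disjoint union of two games. -/
def gunion (G G' : Game) : Game where
  V := G.V ∪ G'.V
  EL := G.EL ∪ G'.EL
  ER := G.ER ∪ G'.ER

/-!
A position is determined by the set `A` picked by Left, the set `B` picked by Right and the player
to move. Extra vertices in `A` never hurt Left: whenever the prescribed move is a vertex Left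
already owns, Left plays an arbitrary vertex instead, which only enlarges `A` again. Hence the
first player can open with any vertex and continue as the second player would. The enlarged
position may finish early, but then either Left has just won, or the board is full and Left owns
every vertex that the original strategy could still have collected.
-/

theorem fills_mono (E : Finset (Finset ℕ)) : Monotone (fills E) :=
  fun _ _ hS ⟨e, he, heS⟩ => ⟨e, he, heS.trans hS⟩

/-- The end of the game as seen from player `p`: `A` is the set of vertices picked by `p`, and `B`
the set picked by the opponent. -/
def Finished (G : Game) (p : Player) (A B : Finset ℕ) : Prop :=
  (fills (G.edges p) A ∨ fills (G.edges p.other) B) ∨ G.V ⊆ A ∪ B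

/-- A goal for player `p`, as a condition `T A B` on the sets `A` and `B` picked by `p` and by the
opponent when the game is finished. It is favorable if additional vertices of `p` and missing
vertices of the opponent do not spoil it, and if winning the game achieves it. -/
structure IsFavorable (G : Game) (p : Player) (T : Finset ℕ → Finset ℕ → Prop) : Prop where
  monotone : Monotone T
  antitone (A : Finset ℕ) : Antitone (T A)
  of_fills {A B : Finset ℕ} : fills (G.edges p) A → ¬ fills (G.edges p.other) B → T A B

theorem isFavorable_win (G : Game) (p : Player) :
    IsFavorable G p fun A _ => fills (G.edges p) A where
  monotone _ _ hA _ := fills_mono _ hA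
  antitone _ _ _ _ := id
  of_fills h _ := h

theorem isFavorable_not_lose (G : Game) (p : Player) :
    IsFavorable G p fun _ B => ¬ fills (G.edges p.other) B where
  monotone _ _ _ _ := id
  antitone _ _ _ hB := mt (fills_mono _ hB)
  of_fills _ h := h

/-- `CanForce G p T q A B`: from the position where `p` has picked `A`, the opponent has picked `B`
and `q` is to move, player `p` can force the play to finish with goal `T` achieved. -/
inductive CanForce (G : Game) (p : Player) (T : Finset ℕ → Finset ℕ → Prop) :
    Player → Finset ℕ → Finset ℕ → Prop
  | finished {q : Player} {A B : Finset ℕ} (hfin : Finished G p A B) (hT : T A B) :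
      CanForce G p T q A B
  | move {q : Player} {A B : Finset ℕ} {x : ℕ} (hq : q = p) (hfin : ¬ Finished G p A B)
      (hx : x ∈ G.V \ (A ∪ B)) (h : CanForce G p T q.other (insert x A) B) : CanForce G p T q A B
  | reply {q : Player} {A B : Finset ℕ} (hq : q ≠ p) (hfin : ¬ Finished G p A B)
      (h : ∀ x ∈ G.V \ (A ∪ B), CanForce G p T q.other A (insert x B)) : CanForce G p T q A B

section Positions

variable {G : Game} {p q : Player} {T : Finset ℕ → Finset ℕ → Prop} {A A' B : Finset ℕ}

theorem Finished.mono (h : Finished G p A B) (hA : A ⊆ A') : Finished G p A' B :=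
  h.imp (Or.imp_left (fills_mono _ hA)) fun hV => hV.trans (Finset.union_subset_union_left hA)

theorem exists_unpicked_of_not_finished (h : ¬ Finished G p A B) : ∃ x, x ∈ G.V \ (A ∪ B) :=
  Finset.sdiff_nonempty.2 fun hV => h (.inr hV)

namespace CanForce

theorem goal_of_finished (h : CanForce G p T q A B) (hfin : Finished G p A B) : T A B := by
  cases h with
  | finished _ hT => exact hT
  | move _ hfin' => exact absurd hfin hfin'
  | reply _ hfin' => exact absurd hfin hfin'

theorem exists_move (h : CanForce G p T q A B) (hq : q = p) (hfin : ¬ Finished G p A B) :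
    ∃ x ∈ G.V \ (A ∪ B), CanForce G p T q.other (insert x A) B := by
  cases h with
  | finished hfin' => exact absurd hfin' hfin
  | move _ _ hx h => exact ⟨_, hx, h⟩
  | reply hq' => exact absurd hq hq'

theorem after_reply (h : CanForce G p T q A B) (hq : q ≠ p) (hfin : ¬ Finished G p A B) {x : ℕ}
    (hx : x ∈ G.V \ (A ∪ B)) : CanForce G p T q.other A (insert x B) := by
  cases h with
  | finished hfin' => exact absurd hfin' hfin
  | move hq' => exact absurd hq' hq
  | reply _ _ h => exact h x hx

-- Every vertex that `p` picks while forcing `T` already lies in `A'`, whatever the opponent does.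
theorem goal_of_subset_union (h : CanForce G p T q A B) (hmono : Monotone T)
    (hanti : ∀ A, Antitone (T A)) (hA : A ⊆ A') (hV : G.V ⊆ A' ∪ B) : T A' B := by
  induction h with
  | finished _ hT => exact hmono hA _ hT
  | move _ _ hx _ ih => exact ih (by grind) hV
  | reply _ hfin _ ih =>
    obtain ⟨x, hx⟩ := exists_unpicked_of_not_finished hfin
    exact hanti _ (Finset.subset_insert x _) (ih x hx hA (by grind))

theorem goal_of_finished_superset (h : CanForce G p T q A B) (hT : IsFavorable G p T)
    (hA : A ⊆ A') (hfin : Finished G p A' B) : T A' B := by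
  by_cases hB : fills (G.edges p.other) B
  · exact hT.monotone hA _ (h.goal_of_finished (.inl (.inr hB)))
  · rcases hfin with (hA' | hB') | hV
    · exact hT.of_fills hA' hB
    · exact absurd hB' hB
    · exact h.goal_of_subset_union hT.monotone hT.antitone hA hV

theorem mono (h : CanForce G p T q A B) (hT : IsFavorable G p T) (hA : A ⊆ A') :
    CanForce G p T q A' B := by
  induction h generalizing A' with
  | finished hfin h => exact .finished (hfin.mono hA) (hT.monotone hA _ h)
  | @move q A B x hq hfin hx h ih =>
    by_cases hfin' : Finished G p A' B
    · exact .finished hfin' ((CanForce.move hq hfin hx h).goal_of_finished_superset hT hA hfin')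
    -- If the prescribed vertex `x` is already owned, any other move serves as well.
    obtain ⟨y, hy, hxy⟩ : ∃ y ∈ G.V \ (A' ∪ B), insert x A ⊆ insert y A' := by
      by_cases hxA' : x ∈ A'
      · obtain ⟨y, hy⟩ := exists_unpicked_of_not_finished hfin'
        exact ⟨y, hy, by grind⟩
      · exact ⟨x, by grind, Finset.insert_subset_insert x hA⟩
    exact .move hq hfin' hy (ih hxy)
  | @reply q A B hq hfin h ih =>
    by_cases hfin' : Finished G p A' B
    · exact .finished hfin' ((CanForce.reply hq hfin h).goal_of_finished_superset hT hA hfin')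
    · exact .reply hq hfin' fun x hx => ih x (by grind) hA

theorem of_other_turn (h : CanForce G p T p.other A B) (hT : IsFavorable G p T) :
    CanForce G p T p A B := by
  by_cases hfin : Finished G p A B
  · exact .finished hfin (h.goal_of_finished hfin)
  · obtain ⟨x, hx⟩ := exists_unpicked_of_not_finished hfin
    exact .move rfl hfin hx (h.mono hT (Finset.subset_insert x A))

end CanForce

end Positions

section Histories

variable {G : Game} {s p : Player} {σ : Strategy} {h : List ℕ} {x : ℕ}

theorem Player.eq_other_iff_ne {p q : Player} : q = p.other ↔ q ≠ p := by
  cases p <;> cases q <;> decide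

theorem mover_succ (s : Player) (i : ℕ) : mover s (i + 1) = (mover s i).other := by
  rcases Nat.mod_two_eq_zero_or_one i with hi | hi <;> cases s <;>
    simp [mover, hi, Nat.add_mod, Player.other]

theorem picked_append_singleton (s p : Player) (h : List ℕ) (x : ℕ) :
    picked s p (h ++ [x]) =
      if mover s h.length = p then insert x (picked s p h) else picked s p h := by
  have picked_before : ((Finset.range h.length).filter fun i => mover s i = p).image
      (fun i => (h ++ [x]).getD i 0) = picked s p h := by
    refine Finset.image_congr fun i hi => List.getD_append _ _ _ _ ?_
    simpa using (Finset.mem_filter.1 hi).1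
  rw [picked, List.length_append, List.length_singleton, Finset.range_add_one,
    Finset.filter_insert]
  split_ifs
  · rw [Finset.image_insert, picked_before]
    simp
  · exact picked_before

theorem picked_union_picked_other (s p : Player) (h : List ℕ) :
    picked s p h ∪ picked s p.other h = h.toFinset := by
  induction h using List.reverseRecOn with
  | nil => rfl
  | append_singleton h x ih =>
    rw [picked_append_singleton, picked_append_singleton, List.toFinset_append, ← ih,
      List.toFinset_cons, List.toFinset_nil]
    have := Player.eq_other_iff_ne (p := p) (q := mover s h.length)
    grind

theorem ended_iff (G : Game) (s p : Player) (h : List ℕ) :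
    ended G s h ↔
      fills (G.edges p) (picked s p h) ∨ fills (G.edges p.other) (picked s p.other h) := by
  cases p
  · rfl
  · exact or_comm

theorem ValidHist.toFinset_subset (hv : ValidHist G s h) : h.toFinset ⊆ G.V :=
  fun x hx => hv.2.1 x (List.mem_toFinset.1 hx)

theorem ValidHist.length_le_card (hv : ValidHist G s h) : h.length ≤ G.V.card :=
  List.toFinset_card_of_nodup hv.1 ▸ Finset.card_le_card hv.toFinset_subset

theorem ValidHist.length_eq_card_iff (hv : ValidHist G s h) :
    h.length = G.V.card ↔ G.V ⊆ h.toFinset := by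
  rw [← List.toFinset_card_of_nodup hv.1]
  exact ⟨fun hc => (Finset.eq_of_subset_of_card_le hv.toFinset_subset hc.ge).ge,
    fun hs => congrArg Finset.card (hv.toFinset_subset.antisymm hs)⟩

theorem ValidHist.complete_iff_finished (hv : ValidHist G s h) (p : Player) :
    Complete G s h ↔ Finished G p (picked s p h) (picked s p.other h) := by
  rw [Complete, Finished, ended_iff G s p, hv.length_eq_card_iff, picked_union_picked_other]

theorem validHist_nil (G : Game) (s : Player) : ValidHist G s [] := by simp [ValidHist]

theorem validHist_append_singleton :
    ValidHist G s (h ++ [x]) ↔ ValidHist G s h ∧ ¬ Complete G s h ∧ x ∈ G.V \ h.toFinset := by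
  have not_ended_iff : (∀ k < (h ++ [x]).length, ¬ ended G s ((h ++ [x]).take k)) ↔
      (∀ k < h.length, ¬ ended G s (h.take k)) ∧ ¬ ended G s h := by
    rw [List.length_append, List.length_singleton, Nat.forall_lt_succ_right, List.take_left]
    refine and_congr_left' (forall₂_congr fun k hk => ?_)
    rw [List.take_append_of_le_length hk.le]
  have append_iff : ValidHist G s (h ++ [x]) ↔
      ValidHist G s h ∧ ¬ ended G s h ∧ x ∈ G.V \ h.toFinset := by
    rw [ValidHist, ValidHist, not_ended_iff]
    simp only [List.nodup_append, List.mem_append, List.mem_singleton, or_imp, forall_and,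
      forall_eq, Finset.mem_sdiff, List.mem_toFinset]
    grind
  rw [append_iff]
  refine and_congr_right fun hv => and_congr_left fun hx => not_congr ?_
  refine (or_iff_left fun hc => ?_).symm
  exact (Finset.mem_sdiff.1 hx).2 (hv.length_eq_card_iff.1 hc (Finset.mem_sdiff.1 hx).1)

theorem follows_nil (s p : Player) (σ : Strategy) : Follows s p σ [] := by simp [Follows]

theorem follows_append_singleton :
    Follows s p σ (h ++ [x]) ↔ Follows s p σ h ∧ (mover s h.length = p → x = σ h) := by
  rw [Follows, Follows, List.length_append, List.length_singleton, Nat.forall_lt_succ_right]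
  refine and_congr (forall₂_congr fun k hk => ?_) ?_
  · rw [List.take_append_of_le_length hk.le, List.getD_append _ _ _ _ hk]
  · rw [List.take_left, List.getD_append_right _ _ _ _ le_rfl]
    simp

theorem Legal.mem_sdiff (hl : Legal G s p σ) (hv : ValidHist G s h) (hf : Follows s p σ h)
    (hc : ¬ Complete G s h) (hm : mover s h.length = p) : σ h ∈ G.V \ h.toFinset := by
  obtain ⟨he, hlen⟩ := not_or.1 hc
  simpa using hl h hv hf he (lt_of_le_of_ne hv.length_le_card hlen) hm

end Histories

/-- Player `p` has a strategy that achieves the goal `T` on `G` when `s` moves first. Winning and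
not losing are the two instances of interest. -/
def HasStrategy (G : Game) (s p : Player) (T : Finset ℕ → Finset ℕ → Prop) : Prop :=
  ∃ σ : Strategy, Legal G s p σ ∧ ∀ h, ValidHist G s h → Follows s p σ h → Complete G s h →
    T (picked s p h) (picked s p.other h)

/-- `CanForce` at the position reached by the history `h` when `s` moved first. -/
def CanForceAfter (G : Game) (s p : Player) (T : Finset ℕ → Finset ℕ → Prop) (h : List ℕ) : Prop :=
  CanForce G p T (mover s h.length) (picked s p h) (picked s p.other h)

section Strategies

variable {G : Game} {s p : Player} {T : Finset ℕ → Finset ℕ → Prop} {σ : Strategy} {h : List ℕ}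
  {x : ℕ}

theorem canForceAfter_append_of_eq (hm : mover s h.length = p) :
    CanForceAfter G s p T (h ++ [x]) ↔
      CanForce G p T (mover s h.length).other (insert x (picked s p h)) (picked s p.other h) := by
  have hne : mover s h.length ≠ p.other := fun ho => Player.eq_other_iff_ne.1 ho hm
  rw [CanForceAfter, List.length_append, List.length_singleton, mover_succ,
    picked_append_singleton, picked_append_singleton, if_pos hm, if_neg hne]

theorem canForceAfter_append_of_ne (hm : mover s h.length ≠ p) :
    CanForceAfter G s p T (h ++ [x]) ↔
      CanForce G p T (mover s h.length).other (picked s p h) (insert x (picked s p.other h)) := by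
  rw [CanForceAfter, List.length_append, List.length_singleton, mover_succ,
    picked_append_singleton, picked_append_singleton, if_neg hm,
    if_pos (Player.eq_other_iff_ne.2 hm)]

theorem CanForceAfter.exists_move (hF : CanForceAfter G s p T h) (hv : ValidHist G s h)
    (hc : ¬ Complete G s h) (hm : mover s h.length = p) :
    ∃ x ∈ G.V \ h.toFinset, CanForceAfter G s p T (h ++ [x]) := by
  simp only [canForceAfter_append_of_eq hm]
  rw [← picked_union_picked_other s p]
  exact CanForce.exists_move hF hm ((hv.complete_iff_finished p).not.1 hc)

theorem CanForceAfter.append_of_ne (hF : CanForceAfter G s p T h) (hv : ValidHist G s h)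
    (hc : ¬ Complete G s h) (hm : mover s h.length ≠ p) (hx : x ∈ G.V \ h.toFinset) :
    CanForceAfter G s p T (h ++ [x]) := by
  rw [canForceAfter_append_of_ne hm]
  rw [← picked_union_picked_other s p] at hx
  exact CanForce.after_reply hF hm ((hv.complete_iff_finished p).not.1 hc) hx

theorem canForceAfter_of_legal (hl : Legal G s p σ)
    (hσ : ∀ h, ValidHist G s h → Follows s p σ h → Complete G s h →
      T (picked s p h) (picked s p.other h))
    (h : List ℕ) (hv : ValidHist G s h) (hf : Follows s p σ h) : CanForceAfter G s p T h := by
  by_cases hc : Complete G s h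
  · exact .finished ((hv.complete_iff_finished p).1 hc) (hσ h hv hf hc)
  have hfin := (hv.complete_iff_finished p).not.1 hc
  have extend : ∀ x ∈ G.V \ h.toFinset, (mover s h.length = p → x = σ h) →
      CanForceAfter G s p T (h ++ [x]) := fun x hx hxσ =>
    canForceAfter_of_legal hl hσ (h ++ [x]) (validHist_append_singleton.2 ⟨hv, hc, hx⟩)
      (follows_append_singleton.2 ⟨hf, hxσ⟩)
  by_cases hm : mover s h.length = p
  · have hx := hl.mem_sdiff hv hf hc hm
    refine .move hm hfin ?_ ((canForceAfter_append_of_eq hm).1 (extend (σ h) hx fun _ => rfl))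
    rwa [picked_union_picked_other]
  · refine .reply hm hfin fun x hx => ?_
    rw [picked_union_picked_other] at hx
    exact (canForceAfter_append_of_ne hm).1 (extend x hx fun hp => absurd hp hm)
termination_by G.V.card - h.length
decreasing_by
  have := (validHist_append_singleton.2 ⟨hv, hc, hx⟩).length_le_card
  grind

theorem canForceAfter_of_follows (h_nil : CanForceAfter G s p T [])
    (hσ : ∀ h, CanForceAfter G s p T h → ValidHist G s h → ¬ Complete G s h →
      mover s h.length = p → CanForceAfter G s p T (h ++ [σ h]))
    (hv : ValidHist G s h) (hf : Follows s p σ h) : CanForceAfter G s p T h := by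
  induction h using List.reverseRecOn with
  | nil => exact h_nil
  | append_singleton h x ih =>
    obtain ⟨hv, hc, hx⟩ := validHist_append_singleton.1 hv
    obtain ⟨hf, hxσ⟩ := follows_append_singleton.1 hf
    by_cases hm : mover s h.length = p
    · exact hxσ hm ▸ hσ h (ih hv hf) hv hc hm
    · exact (ih hv hf).append_of_ne hv hc hm hx

theorem hasStrategy_of_canForceAfter_nil (h_nil : CanForceAfter G s p T []) :
    HasStrategy G s p T := by
  have exists_good_move : ∀ h, ∃ x, CanForceAfter G s p T h → ValidHist G s h →
      ¬ Complete G s h → mover s h.length = p →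
      x ∈ G.V \ h.toFinset ∧ CanForceAfter G s p T (h ++ [x]) := fun h => by
    by_contra! hx
    obtain ⟨hF, hv, hc, hm, -⟩ := hx 0
    obtain ⟨x, hxV, hxF⟩ := hF.exists_move hv hc hm
    exact (hx x).2.2.2.2 hxV hxF
  choose σ hσ using exists_good_move
  have canForce_of_follows : ∀ h, ValidHist G s h → Follows s p σ h → CanForceAfter G s p T h :=
    fun h => canForceAfter_of_follows h_nil fun h hF hv hc hm => (hσ h hF hv hc hm).2
  refine ⟨σ, fun h hv hf he hlen hm => ?_, fun h hv hf hc => ?_⟩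
  · simpa using (hσ h (canForce_of_follows h hv hf) hv (not_or.2 ⟨he, hlen.ne⟩) hm).1
  · exact (canForce_of_follows h hv hf).goal_of_finished ((hv.complete_iff_finished p).1 hc)

theorem hasStrategy_iff_canForce : HasStrategy G s p T ↔ CanForce G p T s ∅ ∅ :=
  ⟨fun ⟨_, hl, hσ⟩ => canForceAfter_of_legal hl hσ [] (validHist_nil G s) (follows_nil s p _),
    hasStrategy_of_canForceAfter_nil⟩

end Strategies

theorem second_to_first_general {G : Game} {p : Player} {T : Finset ℕ → Finset ℕ → Prop}
    (hT : IsFavorable G p T) (h : HasStrategy G p.other p T) : HasStrategy G p p T :=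
  hasStrategy_iff_canForce.2 ((hasStrategy_iff_canForce.1 h).of_other_turn hT)

/-- If Left has a winning (resp. non-losing) strategy on `G` as second player,
then Left has a winning (resp. non-losing) strategy on `G` as first player. -/
theorem second_to_first (G : Game) (hG : WellFormed G) :
    (WinsAs G .R .L → WinsAs G .L .L) ∧
    (NonLosingAs G .R .L → NonLosingAs G .L .L) :=
  ⟨second_to_first_general (p := .L) (isFavorable_win G .L),
    second_to_first_general (p := .L) (isFavorable_not_lose G .L)⟩

end APG
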